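/- Let T = (V, root, par) be a leafless, locally finite rooted directed tree of finite branching index. Then the spectrum of the bounded Cesàro operator C_T on ℓ²(V) equals the closed disc {λ ∈ ℂ : |λ − 1| ≤ 1}. -/

import Mathlib

noncomputable section

open scoped ENNReal

/-- A rooted directed tree encoded by a vertex set `V`, a root, and a parent map. -/
structure TreeData (V : Type) where
  root : V
  par : V → V
  par_root : par root = root
  hroot : ∀ v : V, ∃ n : ℕ, par^[n] v = root

namespace TreeData

variable {V : Type}

open scoped Classical in
/-- The depth of a vertex: the least `n` with `par^[n] v = root`. -/
def dep (T : TreeData V) (v : V) : ℕ := Nat.find (T.hroot v)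

/-- The Cesàro map `Λ_T`. -/
def cesaro (T : TreeData V) (f : V → ℂ) : V → ℂ := fun v =>
  ((T.dep v : ℂ) + 1)⁻¹ * ∑ j ∈ Finset.range (T.dep v + 1), f (T.par^[j] v)

/-- The `n`-th level `Chi^⟨n⟩(root)`: vertices of depth `n`. -/
def level (T : TreeData V) (n : ℕ) : Set V := {v : V | T.dep v = n}

/-- The set of children of a vertex. -/
def chi (T : TreeData V) (u : V) : Set V := {v : V | v ≠ T.root ∧ T.par v = u}

end TreeData

/-- The Hilbert space `ℓ²(V)` of square-summable complex functions on `V`. -/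
abbrev L2 (V : Type) : Type := lp (fun _ : V => ℂ) 2

/-- A branching vertex: a vertex with at least two children. -/
def TreeData.branching {V : Type} (T : TreeData V) (v : V) : Prop := 2 ≤ (T.chi v).encard

/-
Along the path from the root to a vertex `v` of depth `n`, the averages `c = Λf(v)` and
`c' = Λf(par v)` satisfy `f(v) = c + n (c - c')`, and expanding squares gives
`‖f(v)‖² + n ‖c'‖² = ‖f(v) - c‖² + (n + 1) ‖c‖² + n ‖c - c'‖²`. Telescoping, `1 - Λ` does not
increase the sum of `‖f‖²` over any root-to-vertex path. Beyond the branching vertices the tree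
splits into finitely many chains, each finite part of which lies on such a path, so the powers of
`1 - C` are uniformly bounded and its spectrum lies in the closed unit disc.

Conversely let `|z - 1| < 1` and suppose `(z - C) f` is the unit mass at the root. Then
`|(n + 1) z - 1|² (n + 1) ‖c‖² = (n + 1) n |z|² · n ‖c'‖²`, and
`|(n + 1) z - 1|² ≤ (n + 1) n |z|²` for large `n`, so `(dep v + 1) ‖C f(v)‖²` is bounded below by
a positive constant. Comparison with the harmonic series contradicts `C f ∈ ℓ²`.
-/

theorem spectrum_subset_closedBall_of_forall_norm_pow_le {𝕜 A : Type*} [NormedField 𝕜]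
    [NormedRing A] [NormedAlgebra 𝕜 A] [CompleteSpace A] {a : A} {M : ℝ}
    (ha : ∀ k : ℕ, ‖a ^ k‖ ≤ M) : spectrum 𝕜 a ⊆ Metric.closedBall 0 1 := by
  intro z hz
  rw [mem_closedBall_zero_iff]
  by_contra! hz1
  obtain ⟨k, hk⟩ := pow_unbounded_of_one_lt (M * ‖(1 : A)‖) hz1
  refine hk.not_ge ?_
  calc ‖z‖ ^ k = ‖z ^ k‖ := (norm_pow z k).symm
    _ ≤ ‖a ^ k‖ * ‖(1 : A)‖ := spectrum.norm_le_norm_mul_of_mem (spectrum.pow_mem_pow a k hz)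
    _ ≤ M * ‖(1 : A)‖ := by gcongr; exact ha k

section EllTwo

variable {ι : Type*} {E : ι → Type*} [∀ i, NormedAddCommGroup (E i)]

theorem sum_norm_sq_le_norm_sq (f : lp E 2) (s : Finset ι) : ∑ i ∈ s, ‖f i‖ ^ 2 ≤ ‖f‖ ^ 2 := by
  simpa using lp.sum_rpow_le_norm_rpow (by norm_num) f s

theorem norm_le_of_forall_sum_norm_sq_le {f : lp E 2} {M : ℝ} (hM : 0 ≤ M)
    (hf : ∀ s : Finset ι, ∑ i ∈ s, ‖f i‖ ^ 2 ≤ M ^ 2) : ‖f‖ ≤ M :=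
  lp.norm_le_of_forall_sum_le (by norm_num) hM (by simpa using hf)

theorem summable_norm_sq (f : lp E 2) : Summable fun i => ‖f i‖ ^ 2 := by
  simpa using (lp.memℓp f).summable (by norm_num)

end EllTwo

theorem norm_add_smul_sq_add {F : Type*} [SeminormedAddCommGroup F] [InnerProductSpace ℝ F]
    (x y : F) (t : ℝ) :
    ‖x + t • y‖ ^ 2 + t * ‖x - y‖ ^ 2 = ‖t • y‖ ^ 2 + (t + 1) * ‖x‖ ^ 2 + t * ‖y‖ ^ 2 := by
  rw [norm_add_sq_real, norm_sub_sq_real, real_inner_smul_right]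
  ring

theorem norm_ofReal_mul_sub_one_sq (x : ℝ) (z : ℂ) :
    ‖(x : ℂ) * z - 1‖ ^ 2 = x * (x - 1) * ‖z‖ ^ 2 + 1 - x * (1 - ‖z - 1‖ ^ 2) := by
  simp only [← Complex.normSq_eq_norm_sq, Complex.normSq_apply, Complex.sub_re, Complex.sub_im,
    Complex.re_ofReal_mul, Complex.im_ofReal_mul, Complex.one_re, Complex.one_im]
  ring

theorem eventually_norm_mul_sub_one_sq_le {z : ℂ} (hz : ‖z - 1‖ < 1) :
    ∀ᶠ n : ℕ in Filter.atTop,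
      ‖((n + 2 : ℝ) : ℂ) * z - 1‖ ^ 2 ≤ (n + 2) * (n + 1) * ‖z‖ ^ 2 := by
  have hgap : 0 < 1 - ‖z - 1‖ ^ 2 := sub_pos.2 (pow_lt_one₀ (norm_nonneg _) hz two_ne_zero)
  have hlarge : ∀ᶠ n : ℕ in Filter.atTop, 1 / (1 - ‖z - 1‖ ^ 2) ≤ (n : ℝ) :=
    tendsto_natCast_atTop_atTop.eventually_ge_atTop _
  filter_upwards [hlarge] with n hn
  rw [div_le_iff₀ hgap] at hn
  rw [norm_ofReal_mul_sub_one_sq]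
  linarith

namespace TreeData

variable {V : Type} (T : TreeData V)

section Depth

theorem dep_root : T.dep T.root = 0 := by
  classical
  exact (Nat.find_eq_zero _).2 rfl

theorem dep_par_add_one {v : V} (hv : v ≠ T.root) : T.dep (T.par v) + 1 = T.dep v := by
  classical
  exact (Nat.find_comp_succ (T.hroot v) (T.hroot (T.par v)) hv).symm

theorem dep_par (v : V) : T.dep (T.par v) = T.dep v - 1 := by
  by_cases hv : v = T.root
  · rw [hv, T.par_root, dep_root]
  · rw [← T.dep_par_add_one hv, Nat.add_sub_cancel]

theorem dep_iterate_par (k : ℕ) (v : V) : T.dep (T.par^[k] v) = T.dep v - k := by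
  induction k generalizing v with
  | zero => rfl
  | succ k ih => rw [Function.iterate_succ_apply, ih, dep_par, Nat.sub_sub, Nat.add_comm 1 k]

theorem ne_root_of_dep_pos {v : V} (hv : 0 < T.dep v) : v ≠ T.root := by
  rintro rfl
  exact hv.ne' T.dep_root

theorem eq_root_of_dep_eq_zero {v : V} (hv : T.dep v = 0) : v = T.root := by
  by_contra hne
  have := T.dep_par_add_one hne
  omega

theorem par_induction {P : V → Prop} (root : P T.root)
    (par : ∀ v, v ≠ T.root → P (T.par v) → P v) (v : V) : P v := by
  induction hn : T.dep v generalizing v with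
  | zero =>
    rwa [T.eq_root_of_dep_eq_zero hn]
  | succ n ih =>
    have hv : v ≠ T.root := T.ne_root_of_dep_pos (by omega)
    have := T.dep_par_add_one hv
    exact par v hv (ih _ (by omega))

end Depth

section Ancestors

open scoped Classical in
/-- The vertices on the path from the root to `v`, both ends included. -/
def ancestors (v : V) : Finset V := (Finset.range (T.dep v + 1)).image fun j => T.par^[j] v

theorem sum_ancestors {M : Type*} [AddCommMonoid M] (F : V → M) (v : V) :
    ∑ u ∈ T.ancestors v, F u = ∑ j ∈ Finset.range (T.dep v + 1), F (T.par^[j] v) := by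
  classical
  refine Finset.sum_image fun i hi j hj hij => ?_
  have hdep := congrArg T.dep hij
  simp only [dep_iterate_par, Finset.coe_range, Set.mem_Iio] at hdep hi hj
  omega

theorem sum_ancestors_root {M : Type*} [AddCommMonoid M] (F : V → M) :
    ∑ u ∈ T.ancestors T.root, F u = F T.root := by
  simp [sum_ancestors, dep_root]

theorem sum_ancestors_of_ne_root {M : Type*} [AddCommMonoid M] (F : V → M) {v : V}
    (hv : v ≠ T.root) :
    ∑ u ∈ T.ancestors v, F u = ∑ u ∈ T.ancestors (T.par v), F u + F v := by
  simp only [sum_ancestors, ← T.dep_par_add_one hv, Finset.sum_range_succ' _ (_ + 1),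
    Function.iterate_succ_apply, Function.iterate_zero_apply]

theorem iterate_par_mem_ancestors {k : ℕ} {v : V} (hk : k ≤ T.dep v) :
    T.par^[k] v ∈ T.ancestors v := by
  classical
  exact Finset.mem_image_of_mem _ (Finset.mem_range.2 (Nat.lt_succ_of_le hk))

theorem eq_of_mem_ancestors_of_dep_le {u v : V} (hu : u ∈ T.ancestors v)
    (h : T.dep v ≤ T.dep u) : u = v := by
  classical
  obtain ⟨k, hk, rfl⟩ := Finset.mem_image.1 hu
  rw [dep_iterate_par] at h
  obtain rfl : k = 0 := by
    have := Finset.mem_range.1 hk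
    omega
  rfl

theorem sum_le_of_isChain {F : V → ℝ} (hF : ∀ v, 0 ≤ F v) {M : ℝ}
    (hM : ∀ v, ∑ u ∈ T.ancestors v, F u ≤ M) {s : Finset V}
    (hs : IsChain (fun u v => u ∈ T.ancestors v) (s : Set V)) : ∑ v ∈ s, F v ≤ M := by
  rcases s.eq_empty_or_nonempty with rfl | hne
  · exact (Finset.sum_nonneg fun v _ => hF v).trans (hM T.root)
  obtain ⟨w, hw, hmax⟩ := s.exists_max_image T.dep hne
  have hsub : s ⊆ T.ancestors w := by
    intro u hu
    rcases eq_or_ne u w with rfl | huw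
    · exact T.iterate_par_mem_ancestors (Nat.zero_le _)
    · refine (hs hu hw huw).resolve_right fun hwu => huw ?_
      exact (T.eq_of_mem_ancestors_of_dep_le hwu (hmax u hu)).symm
  exact (Finset.sum_le_sum_of_subset_of_nonneg hsub fun v _ _ => hF v).trans (hM w)

end Ancestors

section Chains

/-- The ancestor of `v` at depth `n`, or `v` itself when `v` has depth less than `n`. -/
def ancestorAt (n : ℕ) (v : V) : V := T.par^[T.dep v - n] v

theorem dep_ancestorAt (n : ℕ) (v : V) : T.dep (T.ancestorAt n v) = min n (T.dep v) := by
  rw [ancestorAt, dep_iterate_par]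
  omega

theorem ancestorAt_of_dep_le {n : ℕ} {v : V} (h : T.dep v ≤ n) : T.ancestorAt n v = v := by
  rw [ancestorAt, Nat.sub_eq_zero_of_le h, Function.iterate_zero_apply]

theorem ancestorAt_par {n : ℕ} {v : V} (h : n < T.dep v) :
    T.ancestorAt n (T.par v) = T.ancestorAt n v := by
  rw [ancestorAt, ancestorAt, ← Function.iterate_succ_apply, dep_par]
  congr 2
  omega

theorem ancestorAt_ancestorAt {m n : ℕ} (h : m ≤ n) (v : V) :
    T.ancestorAt m (T.ancestorAt n v) = T.ancestorAt m v := by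
  rw [ancestorAt, dep_ancestorAt, ancestorAt, ancestorAt, ← Function.iterate_add_apply]
  congr 2
  omega

theorem ancestorAt_mem_ancestors (n : ℕ) (v : V) : T.ancestorAt n v ∈ T.ancestors v :=
  T.iterate_par_mem_ancestors (Nat.sub_le _ _)

variable {T}

theorem eq_of_par_eq_of_not_branching {u v : V} (hu : u ≠ T.root) (hv : v ≠ T.root)
    (h : T.par u = T.par v) (hb : ¬ T.branching (T.par v)) : u = v := by
  by_contra hne
  refine hb ?_
  rw [branching, ← Set.encard_pair hne]
  exact Set.encard_le_encard (Set.pair_subset ⟨hu, h⟩ ⟨hv, rfl⟩)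

theorem eq_of_dep_eq_of_ancestorAt_eq {n : ℕ} (hn : ∀ v, T.branching v → T.dep v < n) {u v : V}
    (hdep : T.dep u = T.dep v) (h : T.ancestorAt n u = T.ancestorAt n v) : u = v := by
  induction u using T.par_induction generalizing v with
  | root => exact (T.eq_root_of_dep_eq_zero (hdep.symm.trans T.dep_root)).symm
  | par u hu ih =>
    rcases le_or_gt (T.dep u) n with hun | hun
    · rwa [T.ancestorAt_of_dep_le hun, T.ancestorAt_of_dep_le (hdep ▸ hun)] at h
    have hvn : n < T.dep v := hdep ▸ hun
    have hpar : T.par u = T.par v := by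
      refine ih ?_ ?_
      · rw [dep_par, dep_par, hdep]
      · rw [T.ancestorAt_par hun, T.ancestorAt_par hvn, h]
    refine eq_of_par_eq_of_not_branching hu (T.ne_root_of_dep_pos (by omega)) hpar fun hb => ?_
    have := hn _ hb
    rw [dep_par] at this
    omega

theorem mem_ancestors_of_ancestorAt_eq {n : ℕ} (hn : ∀ v, T.branching v → T.dep v < n) {u v : V}
    (hdep : T.dep u ≤ T.dep v) (h : T.ancestorAt n u = T.ancestorAt n v) :
    u ∈ T.ancestors v := by
  rcases le_total (T.dep u) n with hun | hun
  · rw [← T.ancestorAt_of_dep_le hun, h]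
    exact T.ancestorAt_mem_ancestors n v
  · have hu : u = T.ancestorAt (T.dep u) v := by
      refine eq_of_dep_eq_of_ancestorAt_eq hn ?_ ?_
      · rw [dep_ancestorAt, min_eq_left hdep]
      · rw [ancestorAt_ancestorAt _ hun, h]
    rw [hu]
    exact T.ancestorAt_mem_ancestors _ v

theorem isChain_setOf_ancestorAt_eq {n : ℕ} (hn : ∀ v, T.branching v → T.dep v < n) (w : V) :
    IsChain (fun u v => u ∈ T.ancestors v) {v | T.ancestorAt n v = w} := by
  intro u hu v hv _
  have h : T.ancestorAt n u = T.ancestorAt n v := Eq.trans hu (Eq.symm hv)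
  exact (le_total (T.dep u) (T.dep v)).imp
    (fun huv => mem_ancestors_of_ancestorAt_eq hn huv h)
    (fun hvu => mem_ancestors_of_ancestorAt_eq hn hvu h.symm)

theorem sum_le_card_mul_of_forall_sum_ancestors_le {n : ℕ}
    (hn : ∀ v, T.branching v → T.dep v < n) {W : Finset V} (hW : ∀ v, T.dep v ≤ n → v ∈ W)
    {F : V → ℝ} (hF : ∀ v, 0 ≤ F v) {M : ℝ} (hM : ∀ v, ∑ u ∈ T.ancestors v, F u ≤ M)
    (s : Finset V) : ∑ v ∈ s, F v ≤ W.card * M := by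
  classical
  have hmaps : ∀ v ∈ s, T.ancestorAt n v ∈ W := fun v _ =>
    hW _ ((T.dep_ancestorAt n v).trans_le (min_le_left _ _))
  rw [← Finset.sum_fiberwise_of_maps_to hmaps, ← nsmul_eq_mul]
  refine Finset.sum_le_card_nsmul _ _ _ fun w _ => T.sum_le_of_isChain hF hM ?_
  exact (isChain_setOf_ancestorAt_eq hn w).mono fun v hv => (Finset.mem_filter.1 hv).2

end Chains

section Cesaro

theorem cesaro_eq_sum_ancestors (f : V → ℂ) (v : V) :
    T.cesaro f v = ((T.dep v : ℂ) + 1)⁻¹ * ∑ u ∈ T.ancestors v, f u := by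
  rw [cesaro, sum_ancestors]

theorem cesaro_root (f : V → ℂ) : T.cesaro f T.root = f T.root := by
  simp [cesaro_eq_sum_ancestors, sum_ancestors_root, dep_root]

theorem eq_cesaro_add_dep_mul (f : V → ℂ) (v : V) :
    f v = T.cesaro f v + T.dep v * (T.cesaro f v - T.cesaro f (T.par v)) := by
  by_cases hv : v = T.root
  · rw [hv, cesaro_root, dep_root, Nat.cast_zero, zero_mul, add_zero]
  have hsum (u : V) : ((T.dep u : ℂ) + 1) * T.cesaro f u = ∑ w ∈ T.ancestors u, f w := by
    rw [cesaro_eq_sum_ancestors, mul_inv_cancel_left₀ (Nat.cast_add_one_ne_zero _)]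
  have hpar : (T.dep (T.par v) : ℂ) + 1 = T.dep v := mod_cast T.dep_par_add_one hv
  have hv_sum := hsum v
  rw [T.sum_ancestors_of_ne_root f hv, ← hsum (T.par v), hpar] at hv_sum
  linear_combination -hv_sum

theorem sum_ancestors_norm_sub_cesaro_sq_add_le (f : V → ℂ) (v : V) :
    ∑ u ∈ T.ancestors v, ‖f u - T.cesaro f u‖ ^ 2 + (T.dep v + 1) * ‖T.cesaro f v‖ ^ 2
      ≤ ∑ u ∈ T.ancestors v, ‖f u‖ ^ 2 := by
  induction v using T.par_induction with
  | root => simp [sum_ancestors_root, cesaro_root, dep_root]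
  | par v hv ih =>
    set c := T.cesaro f v with hc
    set d := c - T.cesaro f (T.par v) with hd
    have hfv : f v = c + (T.dep v : ℝ) • d := by
      simpa using T.eq_cesaro_add_dep_mul f v
    have hfv_sub : f v - c = (T.dep v : ℝ) • d := by rw [hfv, add_sub_cancel_left]
    have hpar : (T.dep (T.par v) : ℝ) + 1 = T.dep v := mod_cast T.dep_par_add_one hv
    rw [hpar, ← sub_sub_self c (T.cesaro f (T.par v)), ← hd] at ih
    rw [T.sum_ancestors_of_ne_root _ hv, T.sum_ancestors_of_ne_root _ hv, ← hc, hfv_sub, hfv]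
    have hid := norm_add_smul_sq_add c d (T.dep v)
    have hnonneg : 0 ≤ (T.dep v : ℝ) * ‖d‖ ^ 2 := by positivity
    linarith

theorem sum_ancestors_norm_sub_cesaro_sq_le (f : V → ℂ) (v : V) :
    ∑ u ∈ T.ancestors v, ‖f u - T.cesaro f u‖ ^ 2 ≤ ∑ u ∈ T.ancestors v, ‖f u‖ ^ 2 :=
  (le_add_of_nonneg_right (by positivity)).trans (T.sum_ancestors_norm_sub_cesaro_sq_add_le f v)

end Cesaro

section ResolventEquation

theorem exists_pos_forall_le_of_dep_le {ρ : V → ℝ} (hroot : 0 < ρ T.root)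
    (hstep : ∀ n, ∃ κ > 0, ∀ v, T.dep v = n + 1 → κ * ρ (T.par v) ≤ ρ v) (n : ℕ) :
    ∃ c > 0, ∀ v, T.dep v ≤ n → c ≤ ρ v := by
  induction n with
  | zero =>
    refine ⟨ρ T.root, hroot, fun v hv => ?_⟩
    rw [T.eq_root_of_dep_eq_zero (Nat.le_zero.1 hv)]
  | succ n ih =>
    obtain ⟨c, hc, hcle⟩ := ih
    obtain ⟨κ, hκ, hκle⟩ := hstep n
    refine ⟨min c (κ * c), by positivity, fun v hv => ?_⟩
    rcases Nat.le_succ_iff.1 hv with hvn | hvn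
    · exact (min_le_left _ _).trans (hcle v hvn)
    · have hpar : T.dep (T.par v) ≤ n := by
        rw [dep_par]
        omega
      calc min c (κ * c) ≤ κ * c := min_le_right _ _
        _ ≤ κ * ρ (T.par v) := by gcongr; exact hcle _ hpar
        _ ≤ ρ v := hκle v hvn

theorem exists_pos_forall_le {ρ : V → ℝ} (hroot : 0 < ρ T.root)
    (hstep : ∀ n, ∃ κ > 0, ∀ v, T.dep v = n + 1 → κ * ρ (T.par v) ≤ ρ v)
    (hmono : ∀ᶠ n in Filter.atTop, ∀ v, T.dep v = n + 1 → ρ (T.par v) ≤ ρ v) :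
    ∃ c > 0, ∀ v, c ≤ ρ v := by
  obtain ⟨N, hN⟩ := Filter.eventually_atTop.1 hmono
  obtain ⟨c, hc, hcle⟩ := T.exists_pos_forall_le_of_dep_le hroot hstep N
  refine ⟨c, hc, fun v => ?_⟩
  induction v using T.par_induction with
  | root => exact hcle _ (T.dep_root.trans_le (Nat.zero_le _))
  | par v hv ih =>
    have hdep := T.dep_par_add_one hv
    rcases le_or_gt (T.dep v) N with hvN | hvN
    · exact hcle v hvN
    · exact ih.trans (hN _ (by omega) v hdep.symm)

variable {T} {f : V → ℂ} {z : ℂ}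

theorem dep_add_one_mul_norm_cesaro_sq_recurrence {n : ℕ} {v : V} (hv : T.dep v = n + 1)
    (hf : z * f v = T.cesaro f v) :
    ‖((n + 2 : ℝ) : ℂ) * z - 1‖ ^ 2 * ((T.dep v + 1) * ‖T.cesaro f v‖ ^ 2)
      = (n + 2) * (n + 1) * ‖z‖ ^ 2
        * ((T.dep (T.par v) + 1) * ‖T.cesaro f (T.par v)‖ ^ 2) := by
  have hrec : (((n + 2 : ℝ) : ℂ) * z - 1) * T.cesaro f v
      = ((n + 1 : ℝ) : ℂ) * z * T.cesaro f (T.par v) := by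
    have h := T.eq_cesaro_add_dep_mul f v
    rw [hv] at h
    push_cast at h ⊢
    linear_combination hf - z * h
  have hnorm := congrArg (‖·‖ ^ 2) hrec
  simp only [norm_mul, mul_pow, Complex.norm_real, Real.norm_eq_abs, sq_abs] at hnorm
  rw [dep_par, hv, Nat.add_sub_cancel, Nat.cast_add_one]
  linear_combination (n + 2 : ℝ) * hnorm

theorem exists_pos_forall_le_dep_add_one_mul_norm_cesaro_sq (hz : ‖z - 1‖ < 1)
    (hroot : f T.root ≠ 0) (hf : ∀ v, v ≠ T.root → z * f v = T.cesaro f v) :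
    ∃ c > 0, ∀ v, c ≤ (T.dep v + 1) * ‖T.cesaro f v‖ ^ 2 := by
  have hz0 : 0 < ‖z‖ := by
    refine norm_pos_iff.2 ?_
    rintro rfl
    norm_num at hz
  have hrec (n : ℕ) (v : V) (hv : T.dep v = n + 1) :=
    dep_add_one_mul_norm_cesaro_sq_recurrence hv (hf v (T.ne_root_of_dep_pos (by omega)))
  refine T.exists_pos_forall_le ?_ (fun n => ?_) ?_
  · have := norm_pos_iff.2 hroot
    rw [cesaro_root]
    positivity
  · set a := ‖((n + 2 : ℝ) : ℂ) * z - 1‖ ^ 2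
    -- `a` vanishes when `z = 1 / (n + 2)`, hence the denominator `a + 1`.
    refine ⟨(n + 2) * (n + 1) * ‖z‖ ^ 2 / (a + 1), by positivity, fun v hv => ?_⟩
    rw [div_mul_eq_mul_div, ← hrec n v hv, div_le_iff₀ (by positivity), mul_comm]
    gcongr
    exact le_add_of_nonneg_right zero_le_one
  · filter_upwards [eventually_norm_mul_sub_one_sq_le hz] with n hn v hv
    refine le_of_mul_le_mul_left ?_ (by positivity : 0 < (n + 2) * (n + 1) * ‖z‖ ^ 2)
    rw [← hrec n v hv]
    gcongr

theorem not_summable_of_forall_le_dep_add_one_mul (hdep : Function.Surjective T.dep) {F : V → ℝ}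
    {c : ℝ} (hc : 0 < c) (hF : ∀ v, c ≤ (T.dep v + 1) * F v) : ¬ Summable F := by
  intro hsum
  obtain ⟨σ, hσ⟩ := hdep.hasRightInverse
  have hle (n : ℕ) : c * ((n + 1 : ℕ) : ℝ)⁻¹ ≤ F (σ n) := by
    have h := hF (σ n)
    rw [hσ n, ← Nat.cast_add_one] at h
    rwa [← div_eq_mul_inv, div_le_iff₀' (by positivity)]
  have hharmonic : Summable fun n : ℕ => c * ((n + 1 : ℕ) : ℝ)⁻¹ :=
    .of_nonneg_of_le (fun n => by positivity) hle (hsum.comp_injective hσ.injective)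
  rw [summable_mul_left_iff hc.ne', summable_nat_add_iff 1 (f := fun n : ℕ => (n : ℝ)⁻¹)]
    at hharmonic
  exact Real.not_summable_natCast_inv hharmonic

end ResolventEquation

theorem dep_surjective [Infinite V] (hfin : ∀ n, {v | T.dep v ≤ n}.Finite) :
    Function.Surjective T.dep := by
  intro n
  obtain ⟨v, hv⟩ := (hfin n).exists_notMem
  exact ⟨T.ancestorAt n v, by rw [dep_ancestorAt, min_eq_left (not_le.1 hv).le]⟩

section Operator

variable {T} {C : L2 V →L[ℂ] L2 V}

-- `C` maps the unit mass at the root to `1 / (dep v + 1)`, which is bounded below on low levels.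
theorem finite_setOf_dep_le (hC : ∀ (f : L2 V) (v : V), C f v = T.cesaro ⇑f v) (n : ℕ) :
    {v | T.dep v ≤ n}.Finite := by
  classical
  let e : L2 V := lp.single 2 T.root 1
  have hCe (v : V) : ‖C e v‖ = ((T.dep v : ℝ) + 1)⁻¹ := by
    have hsum : ∑ u ∈ T.ancestors v, e u = 1 := by
      induction v using T.par_induction with
      | root =>
        rw [sum_ancestors_root]
        simp [e]
      | par v hv ih => simpa [e, T.sum_ancestors_of_ne_root _ hv, hv] using ih
    rw [hC, cesaro_eq_sum_ancestors, hsum, mul_one, ← Nat.cast_add_one, norm_inv,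
      Complex.norm_natCast, Nat.cast_add_one]
  have hsmall : ∀ᶠ v in Filter.cofinite, ‖C e v‖ ^ 2 < (((n : ℝ) + 1)⁻¹) ^ 2 :=
    (summable_norm_sq (C e)).tendsto_cofinite_zero.eventually_lt_const (by positivity)
  refine (Filter.eventually_cofinite.1 hsmall).subset fun v hv => ?_
  have hvn : (T.dep v : ℝ) ≤ n := mod_cast hv
  rw [Set.mem_ofPred_eq, not_lt, hCe]
  gcongr

theorem sum_ancestors_norm_pow_one_sub_sq_le
    (hC : ∀ (f : L2 V) (v : V), C f v = T.cesaro ⇑f v) (f : L2 V) (k : ℕ) (v : V) :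
    ∑ u ∈ T.ancestors v, ‖((1 - C) ^ k) f u‖ ^ 2 ≤ ∑ u ∈ T.ancestors v, ‖f u‖ ^ 2 := by
  induction k with
  | zero => simp
  | succ k ih =>
    have hsucc (u : V) : ((1 - C) ^ (k + 1)) f u
        = ((1 - C) ^ k) f u - T.cesaro (((1 - C) ^ k) f) u := by
      rw [← hC, pow_succ']
      rfl
    simp only [hsucc]
    exact (T.sum_ancestors_norm_sub_cesaro_sq_le _ v).trans ih

theorem exists_forall_norm_pow_one_sub_le {n : ℕ} (hn : ∀ v, T.branching v → T.dep v < n)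
    (hC : ∀ (f : L2 V) (v : V), C f v = T.cesaro ⇑f v) :
    ∃ M : ℝ, ∀ k : ℕ, ‖(1 - C) ^ k‖ ≤ M := by
  set W := (finite_setOf_dep_le hC n).toFinset
  refine ⟨√W.card, fun k => ContinuousLinearMap.opNorm_le_bound _ (by positivity) fun f => ?_⟩
  refine norm_le_of_forall_sum_norm_sq_le (by positivity) fun s => ?_
  rw [mul_pow, Real.sq_sqrt (by positivity)]
  refine sum_le_card_mul_of_forall_sum_ancestors_le hn (fun v hv => by simpa [W] using hv)
    (fun v => by positivity) (fun v => ?_) s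
  exact (sum_ancestors_norm_pow_one_sub_sq_le hC f k v).trans (sum_norm_sq_le_norm_sq f _)

theorem spectrum_subset_closedBall {n : ℕ} (hn : ∀ v, T.branching v → T.dep v < n)
    (hC : ∀ (f : L2 V) (v : V), C f v = T.cesaro ⇑f v) :
    spectrum ℂ C ⊆ Metric.closedBall 1 1 := by
  intro z hz
  obtain ⟨M, hM⟩ := exists_forall_norm_pow_one_sub_le hn hC
  have hz' : 1 - z ∈ spectrum ℂ (1 - C) := by
    have h := spectrum.singleton_sub_eq C (1 : ℂ)
    rw [map_one] at h
    exact h ▸ Set.sub_mem_sub rfl hz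
  have h := spectrum_subset_closedBall_of_forall_norm_pow_le hM hz'
  rwa [mem_closedBall_zero_iff, norm_sub_rev, ← mem_closedBall_iff_norm] at h

open scoped Classical in
theorem single_root_notMem_range (hdep : Function.Surjective T.dep)
    (hC : ∀ (f : L2 V) (v : V), C f v = T.cesaro ⇑f v) {z : ℂ} (hz : ‖z - 1‖ < 1) :
    lp.single 2 T.root 1 ∉ Set.range (algebraMap ℂ (L2 V →L[ℂ] L2 V) z - C) := by
  rintro ⟨f, hf⟩
  have heq (v : V) : z * f v - T.cesaro f v = (Pi.single T.root 1 : V → ℂ) v := by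
    rw [← hC, ← lp.coeFn_single 2, ← hf]
    rfl
  have hroot : f T.root ≠ 0 := by
    intro h0
    simpa [cesaro_root, h0] using heq T.root
  obtain ⟨c, hc, hcle⟩ := exists_pos_forall_le_dep_add_one_mul_norm_cesaro_sq hz hroot
    fun v hv => sub_eq_zero.1 ((heq v).trans (Pi.single_eq_of_ne hv 1))
  simp only [← hC] at hcle
  exact not_summable_of_forall_le_dep_add_one_mul hdep hc hcle (summable_norm_sq (C f))

theorem closedBall_subset_spectrum (hdep : Function.Surjective T.dep)
    (hC : ∀ (f : L2 V) (v : V), C f v = T.cesaro ⇑f v) :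
    Metric.closedBall 1 1 ⊆ spectrum ℂ C := by
  classical
  rw [← closure_ball (1 : ℂ) one_ne_zero]
  refine closure_minimal (fun z hz => ?_) (spectrum.isClosed C)
  rw [spectrum.mem_iff, ContinuousLinearMap.isUnit_iff_bijective]
  exact fun h => single_root_notMem_range hdep hC (mem_ball_iff_norm.1 hz) (h.surjective _)

end Operator

end TreeData

theorem spectrum_cesaro_general {V : Type} [Infinite V] (T : TreeData V)
    (hfbi : ∃ B : ℕ, ∀ v : V, T.branching v → T.dep v ≤ B)
    (C : L2 V →L[ℂ] L2 V) (hC : ∀ (f : L2 V) (v : V), C f v = T.cesaro ⇑f v) :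
    spectrum ℂ C = Metric.closedBall (1 : ℂ) 1 := by
  obtain ⟨B, hB⟩ := hfbi
  have hdep := T.dep_surjective (TreeData.finite_setOf_dep_le hC)
  exact (TreeData.spectrum_subset_closedBall (fun v hv => Nat.lt_succ_of_le (hB v hv)) hC).antisymm
    (TreeData.closedBall_subset_spectrum hdep hC)

/-- For a leafless, locally finite rooted directed tree of finite branching
index, the spectrum of the bounded Cesàro operator `C_T` is the closed disc of radius `1`
centered at `1`. -/
theorem spectrum_cesaro {V : Type} [Countable V] [Infinite V]
    (T : TreeData V)
    (hleafless : ∀ u : V, (T.chi u).Nonempty)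
    (hlocfin : ∀ u : V, (T.chi u).Finite)
    (hfbi : ∃ B : ℕ, ∀ v : V, T.branching v → T.dep v ≤ B)
    (C : L2 V →L[ℂ] L2 V) (hC : ∀ (f : L2 V) (v : V), C f v = T.cesaro ⇑f v) :
    spectrum ℂ C = Metric.closedBall (1 : ℂ) 1 :=
  spectrum_cesaro_general T hfbi C hC
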